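/- Let G be a character on k⟨a,b⟩. Then for all graded posets P and Q, the quasisymmetric power series g̃F satisfies g̃F(P × Q) = g̃F(P) · g̃F(Q); that is, the chain map of the second kind is multiplicative with respect to the Cartesian product of posets. -/

import Mathlib

open scoped TensorProduct

noncomputable section

namespace Tcheb

/-! ### The algebra `R⟨a,b⟩` of ab-polynomials -/

/-- Words in the two noncommuting letters `a` (encoded `true`) and `b` (encoded `false`). -/
abbrev ABWord : Type := FreeMonoid Bool

/-- The ring `R⟨a,b⟩` of polynomials in two noncommuting variables `a` and `b`. -/
abbrev AB (R : Type) [CommRing R] : Type := MonoidAlgebra R ABWord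

variable (R : Type) [CommRing R]

/-- The ab-monomial corresponding to a word. -/
def word (l : List Bool) : AB R := MonoidAlgebra.of R ABWord (FreeMonoid.ofList l)

/-- The variable `a`. -/
def av : AB R := word R [true]
/-- The variable `b`. -/
def bv : AB R := word R [false]
/-- `c = a + b`. -/
def cv : AB R := av R + bv R
/-- `d = ab + ba`. -/
def dv : AB R := av R * bv R + bv R * av R
/-- `a - b`. -/
def ev : AB R := av R - bv R

/-- The linear map defined by prescribing values on the basis of ab-monomials. -/
def onBasis {M : Type} [AddCommMonoid M] [Module R M] (f : List Bool → M) :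
    AB R →ₗ[R] M :=
  (Finsupp.lift M R ABWord fun w => f (FreeMonoid.toList w)) ∘ₗ
    (MonoidAlgebra.coeffLinearEquiv R).toLinearMap

/-- The algebra map `A` with `A(a) = 1`, `A(b) = 0`. -/
def Amap : AB R →ₐ[R] R :=
  MonoidAlgebra.lift R R ABWord (FreeMonoid.lift fun x => if x then (1 : R) else 0)

/-- The coproduct on `R⟨a,b⟩`: on an ab-monomial `u₁ ⋯ u_k` it is
`Σ_{i=1}^k u₁ ⋯ u_{i-1} ⊗ u_{i+1} ⋯ u_k`. -/
def Delta : AB R →ₗ[R] AB R ⊗[R] AB R :=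
  onBasis R fun w => ∑ i ∈ Finset.range w.length,
    word R (w.take i) ⊗ₜ[R] word R (w.drop (i + 1))

/-- The linear map `C(u) = 2·A(u) + Σ_u A(u₍₁₎)·A(u₍₂₎)`. -/
def Cmap : AB R →ₗ[R] R :=
  2 • (Amap R).toLinearMap +
    (LinearMap.mul' R R ∘ₗ
      TensorProduct.map (Amap R).toLinearMap (Amap R).toLinearMap) ∘ₗ Delta R

/-- `κ(u) = A(u)·(a-b)^(deg u)` on homogeneous `u`, extended linearly. -/
def kappa : AB R →ₗ[R] AB R :=
  onBasis R fun w => Amap R (word R w) • ev R ^ w.length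

/-- `ν(u) = C(u)·(a-b)^(deg u)` on homogeneous `u`, extended linearly. -/
def nuMap : AB R →ₗ[R] AB R :=
  onBasis R fun w => Cmap R (word R w) • ev R ^ w.length

end Tcheb

namespace Tcheb

/-- Cutting a word into the list of segments between the (sorted) cut positions. -/
def segments : List Bool → List ℕ → List (List Bool)
  | l, [] => [l]
  | l, i :: rest => l.take i :: segments (l.drop (i + 1)) (rest.map fun j => j - (i + 1))
  termination_by _ cuts => cuts.length
  decreasing_by simp

variable (R : Type) [CommRing R]

/-- For segments `[s₁, …, s_k]` this is `ν(s₁)·b·ν(s₂)·b ⋯ b·ν(s_{k-1})·b·κ(s_k)`. -/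
def chainProd : List (List Bool) → AB R
  | [] => 1
  | [s] => kappa R (word R s)
  | s :: rest => nuMap R (word R s) * bv R * chainProd rest

/-- The Tchebyshev transform (of the first kind) on ab-polynomials:
`T(u) = Σ_{k ≥ 1} Σ_u ν(u₍₁₎)·b·ν(u₍₂₎)·b ⋯ b·ν(u₍ₖ₋₁₎)·b·κ(u₍ₖ₎)`,
where the inner sum is over the `k`-fold coproduct.  On the ab-monomial basis this
is the sum, over all sets of positions of deleted letters, of the corresponding
products over the resulting segments. -/
def Tmap : AB R →ₗ[R] AB R :=
  onBasis R fun w => ∑ S : Finset (Fin w.length),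
    chainProd R (segments w ((S.sort (· ≤ ·)).map Fin.val))

/-- The `ω` map on a word: replace each occurrence of `ab` by `2d` and all
remaining letters by `c`. -/
def omegaWord : List Bool → AB R
  | [] => 1
  | true :: false :: rest => (2 * dv R) * omegaWord rest
  | _ :: rest => cv R * omegaWord rest

/-- The `ω` map of Billera–Ehrenborg–Readdy. -/
def omegaMap : AB R →ₗ[R] AB R := onBasis R fun w => omegaWord R w

/-- The reversal involution `u ↦ u*` of ab-polynomials. -/
def revMap : AB R →ₗ[R] AB R := onBasis R fun w => word R w.reverse

/-- `H*(1) = 0` and `H*(u·a) = H*(u·b) = u`. -/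
def Hstar : AB R →ₗ[R] AB R :=
  onBasis R fun w => if w = [] then 0 else word R w.dropLast

/-- The Tchebyshev transform of the second kind `U(u) = H*(T(u·a))`. -/
def Umap : AB R →ₗ[R] AB R := Hstar R ∘ₗ Tmap R ∘ₗ LinearMap.mulRight R (av R)

/-- `σ(u) = Σ_u κ(u₍₁₎)·b·T(u₍₂₎)`. -/
def sigmaMap : AB R →ₗ[R] AB R :=
  LinearMap.mul' R (AB R) ∘ₗ
    TensorProduct.map (LinearMap.mulRight R (bv R) ∘ₗ kappa R) (Tmap R) ∘ₗ Delta R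

/-! ### Graded posets and the ab-index -/

/-- `rk` is a rank function for a bounded poset: `rk ⊥ = 0` and covers raise rank by one. -/
def IsRankFun (α : Type) [PartialOrder α] [OrderBot α] (rk : α → ℕ) : Prop :=
  rk ⊥ = 0 ∧ ∀ x y : α, x ⋖ y → rk y = rk x + 1

/-- `f` lists the elements of a chain in increasing order with respect to the
strict order relation `lt`. -/
def IsStrictChain {α : Type} (lt : α → α → Prop) {n : ℕ} (f : Fin (n + 1) → α) : Prop :=
  ∀ i j : Fin (n + 1), i < j → lt (f i) (f j)

/-- The weight of a chain `x₀ < x₁ < ⋯ < x_k`: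
`(a-b)^{ρ(x₀,x₁)-1}·b·(a-b)^{ρ(x₁,x₂)-1}·b ⋯ b·(a-b)^{ρ(x_{k-1},x_k)-1}`. -/
def chainWt {α : Type} (rk : α → ℕ) {n : ℕ} (f : Fin (n + 1) → α) : AB R :=
  (List.intersperse (bv R)
    (List.ofFn fun i : Fin n => ev R ^ (rk (f i.succ) - rk (f i.castSucc) - 1))).prod

/-- The ab-index `Ψ` of the graded poset with strict order relation `lt`, rank
function `rk`, minimum `b` and maximum `t`: the sum of the weights of all chains
from `b` to `t`. -/
def PsiRel {α : Type} (lt : α → α → Prop) (rk : α → ℕ) (b t : α) : AB R :=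
  ∑ᶠ (n : ℕ), ∑ᶠ (f : Fin (n + 1) → α)
    (_ : IsStrictChain lt f ∧ f 0 = b ∧ f (Fin.last n) = t), chainWt R rk f

end Tcheb

namespace Tcheb

/-! ### The Tchebyshev transform of a graded poset -/

section TPoset

variable (α : Type) [PartialOrder α] [BoundedOrder α]

/-- The elements `[x,y]` of the Tchebyshev transform: intervals of `P ∪ {-1̂}`,
i.e. pairs `(x,y)` with `x ∈ P ∪ {-1̂}`, `y ∈ P` and `x < y`. -/
def TPel : Type := {p : WithBot α × α // p.1 < (p.2 : WithBot α)}

/-- The underlying set of the Tchebyshev transform `T(P)`: the intervals `[x,y]`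
together with a new maximum element (`none`). -/
def TP : Type := Option (TPel α)

/-- The cover relation of the Tchebyshev transform `T(P)`:
`[x,y] ⋖ [y,w]` and `[x,y] ⋖ [x,w]` whenever `y ⋖ w` in `P`, and `[x,1̂] ⋖ 1̂_{T(P)}`. -/
inductive TPcov : TP α → TP α → Prop
  | up {x : WithBot α} {y w : α} (h1 : x < (y : WithBot α))
      (h2 : (y : WithBot α) < (w : WithBot α)) (hc : y ⋖ w) :
      TPcov (some ⟨(x, y), h1⟩) (some ⟨((y : WithBot α), w), h2⟩)
  | same {x : WithBot α} {y w : α} (h1 : x < (y : WithBot α))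
      (h2 : x < (w : WithBot α)) (hc : y ⋖ w) :
      TPcov (some ⟨(x, y), h1⟩) (some ⟨(x, w), h2⟩)
  | top {x : WithBot α} (h1 : x < ((⊤ : α) : WithBot α)) :
      TPcov (some ⟨(x, (⊤ : α)), h1⟩) none

/-- The strict order relation of `T(P)`, generated by the cover relation. -/
def TPlt : TP α → TP α → Prop := Relation.TransGen (TPcov α)

/-- The order relation of `T(P)`, generated by the cover relation. -/
def TPle : TP α → TP α → Prop := Relation.ReflTransGen (TPcov α)

/-- The minimum element `[-1̂, 0̂]` of `T(P)`. -/
def TPbot : TP α := some ⟨((⊥ : WithBot α), (⊥ : α)), WithBot.bot_lt_coe _⟩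

/-- The maximum element `1̂_{T(P)}` of `T(P)`. -/
def TPtop : TP α := none

/-- The rank function of `T(P)`: `ρ([x,y]) = ρ(y)` and `ρ(1̂_{T(P)}) = ρ(P) + 1`. -/
def TPrk (rk : α → ℕ) : TP α → ℕ
  | some p => rk p.1.2
  | none => rk (⊤ : α) + 1

theorem TPbot_ne_TPtop : TPbot α ≠ TPtop α := Option.some_ne_none _

/-- The map `z : T(P) → P ∪ {2̂}` with `z([x,y]) = y` and `z(1̂_{T(P)}) = 2̂`. -/
def zmap : TP α → WithTop α
  | some p => (p.1.2 : WithTop α)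
  | none => ⊤

/-- The number of elements of the interval `[u,v]` of `P`, for `u, v ∈ P ∪ {2̂}`. -/
def intervalCard (u v : WithTop α) : ℕ :=
  Set.ncard {t : α | u ≤ (t : WithTop α) ∧ (t : WithTop α) ≤ v}

end TPoset

/-! ### The dual diamond product -/

/-- The strict order relation of the dual diamond product
`P ◇* Q = ((P ∖ {1̂}) × (Q ∖ {1̂})) ∪ {1̂}` (with `none` the new maximum), built from
the order relations `leA, ltA` and `leB, ltB` of the two factors. -/
def dsLT {A B : Type} (leA ltA : A → A → Prop) (leB ltB : B → B → Prop) :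
    Option (A × B) → Option (A × B) → Prop
  | some p, some q => (leA p.1 q.1 ∧ leB p.2 q.2) ∧ (ltA p.1 q.1 ∨ ltB p.2 q.2)
  | some _, none => True
  | none, _ => False

/-! ### EL-labelings -/

/-- The list of edge labels along a chain (given as a list of poset elements). -/
def labelsList {α Λ : Type} (lam : α → α → Λ) (l : List α) : List Λ :=
  (l.zip l.tail).map fun p => lam p.1 p.2

/-- `l` is a maximal (saturated) chain of the interval `[x,y]` with respect to the
cover relation `cov`: it runs from `x` to `y` and every step is a cover. -/
def IsMaxChainList {α : Type} (cov : α → α → Prop) (x y : α) (l : List α) : Prop :=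
  l.head? = some x ∧ l.getLast? = some y ∧ l.Chain' cov

/-- An `EL`-labeling of the poset whose cover relation is `cov`, with labels in the
linearly ordered set `(Λ, lle, llt)`: every interval has a unique rising maximal
chain, which moreover is lexicographically least among all maximal chains of the
interval. -/
def IsELLabeling (α Λ : Type) (lle llt : Λ → Λ → Prop)
    (cov : α → α → Prop) (lam : α → α → Λ) : Prop :=
  ∀ x y : α, Relation.ReflTransGen cov x y →
    ∃ l : List α, (IsMaxChainList cov x y l ∧ (labelsList lam l).Chain' lle) ∧
      (∀ l' : List α, IsMaxChainList cov x y l' →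
        (labelsList lam l').Chain' lle → l' = l) ∧
      (∀ l' : List α, IsMaxChainList cov x y l' →
        labelsList lam l = labelsList lam l' ∨
          List.Lex llt (labelsList lam l) (labelsList lam l'))

/-! ### Eulerian posets -/

/-- A graded poset is Eulerian if every nontrivial interval `[x,y]` has the
same number of elements of even rank as of odd rank. -/
def IsEulerian (α : Type) [PartialOrder α] (rk : α → ℕ) : Prop :=
  ∀ x y : α, x < y →
    Set.ncard {z : α | x ≤ z ∧ z ≤ y ∧ Even (rk z)} =
      Set.ncard {z : α | x ≤ z ∧ z ≤ y ∧ ¬ Even (rk z)}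

/-! ### The face lattice of the crosspolytope -/

/-- A face of the `n`-dimensional crosspolytope: a partial sign vector, i.e. the
pair `(S, ε)` of a subset `S ⊆ {1,…,n}` (the set of coordinates where the function
takes a value `some`) together with a sign function `ε` on `S`. -/
def CrossEl (n : ℕ) : Type := Fin n → Option Bool

/-- `(S,ε) ≤ (T,δ)` iff `S ⊆ T` and `δ` restricted to `S` is `ε`. -/
instance (n : ℕ) : PartialOrder (CrossEl n) where
  le f g := ∀ i s, f i = some s → g i = some s
  le_refl f i s h := h
  le_trans f g h fg gh i s hi := gh i s (fg i s hi)
  le_antisymm f g fg gf := by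
    funext i
    cases hf : f i with
    | some s => exact (fg i s hf).symm
    | none =>
      cases hg : g i with
      | some s => exact absurd (gf i s hg) (by simp [hf])
      | none => rfl

/-- The face lattice of the `n`-dimensional crosspolytope: all partial sign
vectors together with a new maximum element. -/
abbrev Cross (n : ℕ) : Type := WithTop (CrossEl n)

/-- The rank function of the face lattice of the crosspolytope:
`ρ(S,ε) = |S|` and the maximum has rank `n + 1`. -/
def crossRk (n : ℕ) : Cross n → ℕ
  | none => n + 1
  | some f => (Finset.univ.filter fun i : Fin n => (f i).isSome).card

/-- The minimal element (the empty face) of the crosspolytope face lattice. -/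
def crossBot (n : ℕ) : Cross n := WithTop.some (fun _ => none)

/-- The maximal element of the crosspolytope face lattice. -/
def crossTop (n : ℕ) : Cross n := ⊤

/-! ### Quasisymmetric functions -/

/-- The monomial quasisymmetric function `M_{(p₁,…,p_k)}`, as a formal power
series in the countably many commuting variables `t₁, t₂, …` (indexed by `ℕ`). -/
def MQ (R : Type) [CommRing R] (ps : List ℕ) : MvPowerSeries ℕ R :=
  fun m => if ((m.support.sort (· ≤ ·)).map fun i => m i) = ps then 1 else 0

/-- The `t`-part of a monomial in the variables `s` (index `none`) and
`t₁, t₂, …` (indices `some i`). -/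
def tpart (m : Option ℕ →₀ ℕ) : ℕ →₀ ℕ :=
  Finsupp.comapDomain some m (Option.some_injective ℕ).injOn

/-- The type B monomial quasisymmetric function `s^p · M_{(p₁,…,p_k)}`, a formal
power series in the variables `s` (index `none`) and `t₁, t₂, …` (indices `some i`). -/
def MB (R : Type) [CommRing R] (p : ℕ) (ps : List ℕ) : MvPowerSeries (Option ℕ) R :=
  fun m => if m none = p ∧
      (((tpart m).support.sort (· ≤ ·)).map fun i => tpart m i) = ps then 1 else 0

/-- The quasisymmetric function `F(P)` of the graded poset with strict order
relation `lt`, rank function `rk`, minimum `b` and maximum `t`: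
`F(P) = Σ_c M_{(ρ(x₀,x₁),…,ρ(x_{k-1},x_k))}` over all chains `c` from `b` to `t`. -/
def FQ (R : Type) [CommRing R] {α : Type} (lt : α → α → Prop) (rk : α → ℕ)
    (b t : α) : MvPowerSeries ℕ R :=
  ∑ᶠ (n : ℕ), ∑ᶠ (f : Fin (n + 1) → α)
    (_ : IsStrictChain lt f ∧ f 0 = b ∧ f (Fin.last n) = t),
    MQ R (List.ofFn fun i : Fin n => rk (f i.succ) - rk (f i.castSucc))

/-- The type B quasisymmetric function `F_B(P) = Σ_{0̂ < x ≤ 1̂} s^{ρ(x)-1}·F([x,1̂])`,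
written as a sum over all chains `0̂ < x₀ < x₁ < ⋯ < x_k = 1̂` of
`s^{ρ(x₀)-1}·M_{(ρ(x₀,x₁),…,ρ(x_{k-1},x_k))}`. -/
def FB (R : Type) [CommRing R] {α : Type} (lt : α → α → Prop) (rk : α → ℕ)
    (b t : α) : MvPowerSeries (Option ℕ) R :=
  ∑ᶠ (n : ℕ), ∑ᶠ (f : Fin (n + 1) → α)
    (_ : IsStrictChain lt f ∧ lt b (f 0) ∧ f (Fin.last n) = t),
    MB R (rk (f 0) - 1) (List.ofFn fun i : Fin n => rk (f i.succ) - rk (f i.castSucc))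

/-! ### Characters and the chain maps -/

/-- A character on `k⟨a,b⟩`: a linear functional which is multiplicative with
respect to Cartesian products of graded posets (of rank at least 1). -/
def IsCharacter (k : Type) [Field k] (G : AB k →ₗ[k] k) : Prop :=
  ∀ (α β : Type) [Fintype α] [Fintype β] [PartialOrder α] [PartialOrder β]
    [BoundedOrder α] [BoundedOrder β], ∀ (rkα : α → ℕ) (rkβ : β → ℕ),
    IsRankFun α rkα → IsRankFun β rkβ → 1 ≤ rkα ⊤ → 1 ≤ rkβ ⊤ →
    G (PsiRel k (· < ·) (fun p : α × β => rkα p.1 + rkβ p.2)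
        ((⊥ : α), (⊥ : β)) ((⊤ : α), (⊤ : β))) =
      G (PsiRel k (· < ·) rkα ⊥ ⊤) * G (PsiRel k (· < ·) rkβ ⊥ ⊤)

/-- The quasisymmetric function image `g̃F(P)` of the chain map of the second kind:
`Σ_c G(Ψ([x₀,x₁])) ⋯ G(Ψ([x_{k-1},x_k])) · M_{(ρ(x₀,x₁),…,ρ(x_{k-1},x_k))}`,
summed over all chains `c = {b = x₀ < ⋯ < x_k = t}`. -/
def gtF (k : Type) [Field k] (G : AB k →ₗ[k] k) {α : Type} (lt : α → α → Prop)
    (rk : α → ℕ) (b t : α) : MvPowerSeries ℕ k :=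
  ∑ᶠ (n : ℕ), ∑ᶠ (f : Fin (n + 1) → α)
    (_ : IsStrictChain lt f ∧ f 0 = b ∧ f (Fin.last n) = t),
    (∏ i : Fin n, G (PsiRel k lt rk (f i.castSucc) (f i.succ))) •
      MQ k (List.ofFn fun i : Fin n => rk (f i.succ) - rk (f i.castSucc))

/-- The type B quasisymmetric function image `gF_B(P) = Σ_{0̂ < x ≤ 1̂}
s^{ρ(x)-1}·g̃F([x,1̂])` of the chain map of the first kind, written as a sum over
all chains `0̂ < x₀ < ⋯ < x_k = 1̂`. -/
def gFB (k : Type) [Field k] (G : AB k →ₗ[k] k) {α : Type} (lt : α → α → Prop)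
    (rk : α → ℕ) (b t : α) : MvPowerSeries (Option ℕ) k :=
  ∑ᶠ (n : ℕ), ∑ᶠ (f : Fin (n + 1) → α)
    (_ : IsStrictChain lt f ∧ lt b (f 0) ∧ f (Fin.last n) = t),
    (∏ i : Fin n, G (PsiRel k lt rk (f i.castSucc) (f i.succ))) •
      MB k (rk (f 0) - 1) (List.ofFn fun i : Fin n => rk (f i.succ) - rk (f i.castSucc))

/-- The space of homogeneous ab-polynomials of degree `n`. -/
def ABhomog (k : Type) [Field k] (n : ℕ) : Submodule k (AB k) :=
  Submodule.span k {x : AB k | ∃ w : List Bool, w.length = n ∧ x = word k w}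

/-! ### Helper lemmas -/

theorem rank_strictMono {α : Type} [Fintype α] [PartialOrder α] [BoundedOrder α]
    {rk : α → ℕ} (h : IsRankFun α rk) : StrictMono rk := by
  classical
  let _ : LocallyFiniteOrder α := Fintype.toLocallyFiniteOrder
  rw [strictMono_iff_forall_covBy]
  intro a b hab
  have := h.2 a b hab
  omega

theorem strictChain_iff {α : Type} [PartialOrder α] {n : ℕ} (f : Fin (n + 1) → α) :
    IsStrictChain (· < ·) f ↔ ∀ i : Fin n, f i.castSucc < f i.succ := by
  rw [← Fin.strictMono_iff_lt_succ]
  exact ⟨fun h i j hij => h i j hij, fun h i j hij => h hij⟩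

/-- Transport of the ab-index along an embedding onto an interval. -/
theorem PsiRel_transport (R : Type) [CommRing R] {α γ : Type} [PartialOrder α] [PartialOrder γ]
    (rk : α → ℕ) (rk' : γ → ℕ) (e : γ ↪o α) (b t : γ)
    (hr : ∀ z, e b ≤ z → z ≤ e t → ∃ u, e u = z)
    (hrk : ∀ u v, b ≤ u → u < v → rk (e v) - rk (e u) = rk' v - rk' u) :
    PsiRel R (· < ·) rk (e b) (e t) = PsiRel R (· < ·) rk' b t := by
  unfold PsiRel
  refine finsum_congr fun n => ?_
  symm
  refine finsum_mem_eq_of_bijOn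
    (s := {f : Fin (n + 1) → γ | IsStrictChain (· < ·) f ∧ f 0 = b ∧ f (Fin.last n) = t})
    (t := {f : Fin (n + 1) → α | IsStrictChain (· < ·) f ∧ f 0 = e b ∧ f (Fin.last n) = e t})
    (fun f => fun i => e (f i)) ⟨?_, ?_, ?_⟩ ?_
  · rintro f ⟨h1, h2, h3⟩
    exact ⟨fun i j hij => e.lt_iff_lt.2 (h1 i j hij), by simp [h2], by simp [h3]⟩
  · intro f _ g _ hfg
    funext i
    exact e.injective (congrFun hfg i)
  · rintro f ⟨h1, h2, h3⟩
    have hm : StrictMono f := fun i j hij => h1 i j hij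
    have : ∀ i, ∃ u, e u = f i := fun i => hr _
      (by rw [← h2]; exact hm.monotone (Fin.zero_le i))
      (by rw [← h3]; exact hm.monotone (Fin.le_last i))
    choose g hg using this
    refine ⟨g, ⟨fun i j hij => ?_, ?_, ?_⟩, funext hg⟩
    · exact e.lt_iff_lt.1 (by rw [hg, hg]; exact h1 i j hij)
    · exact e.injective (by rw [hg, h2])
    · exact e.injective (by rw [hg, h3])
  · rintro f ⟨h1, h2, h3⟩
    have hm : StrictMono f := fun i j hij => h1 i j hij
    unfold chainWt
    congr 3
    funext i
    rw [hrk]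
    · rw [← h2]; exact hm.monotone (Fin.zero_le _)
    · exact h1 _ _ (Fin.castSucc_lt_succ)

theorem coeff_MQ (R : Type) [CommRing R] (ps : List ℕ) (m : ℕ →₀ ℕ) :
    MvPowerSeries.coeff m (MQ R ps) =
      if ((m.support.sort (· ≤ ·)).map fun i => m i) = ps then 1 else 0 := rfl

section Mat

variable (k : Type) [Field k] (G : AB k →ₗ[k] k)

open Classical in
/-- The normalised value of `G` on the interval `[x,y]`. -/
def gval {α : Type} [PartialOrder α] (rk : α → ℕ) (x y : α) : k :=
  if x = y then 1 else G (PsiRel k (· < ·) rk x y)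

open Classical in
/-- The incidence matrix of steps of rank `d`. -/
def Emat {α : Type} [PartialOrder α] (rk : α → ℕ) (d : ℕ) : Matrix α α k :=
  fun x y => if x ≤ y ∧ rk y - rk x = d then gval k G rk x y else 0

open Classical in
/-- The generating matrix of steps in the variable `t_i`. -/
def Xmat {α : Type} [PartialOrder α] (rk : α → ℕ) (i : ℕ) :
    Matrix α α (MvPowerSeries ℕ k) :=
  fun x y => if x ≤ y then
    MvPowerSeries.monomial (Finsupp.single i (rk y - rk x)) (gval k G rk x y) else 0

variable {α : Type} [Fintype α] [DecidableEq α] [PartialOrder α] (rk : α → ℕ)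

theorem Emat_zero (h : StrictMono rk) : Emat k G rk 0 = 1 := by
  ext x y
  unfold Emat gval
  rw [Matrix.one_apply]
  by_cases hxy : x = y
  · subst hxy; simp
  · have h0 : ¬ (x ≤ y ∧ rk y - rk x = 0) := by
      rintro ⟨h1, h2⟩
      have := h (lt_of_le_of_ne h1 hxy)
      omega
    rw [if_neg h0, if_neg hxy]

open Classical in
theorem Emat_pos {d : ℕ} (hd : 0 < d) (x y : α) : Emat k G rk d x y =
    if x < y ∧ rk y - rk x = d then G (PsiRel k (· < ·) rk x y) else 0 := by
  unfold Emat gval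
  by_cases hxy : x = y
  · subst hxy
    simp [hd.ne]
  · simp [lt_iff_le_and_ne, hxy]

theorem ofFn_prod_apply {S : Type} [CommRing S] {n : ℕ} (M : Fin n → Matrix α α S) (x y : α) :
    (List.ofFn M).prod x y = ∑ f : Fin (n + 1) → α,
      if f 0 = x ∧ f (Fin.last n) = y then ∏ i : Fin n, M i (f i.castSucc) (f i.succ) else 0 := by
  induction n generalizing x with
  | zero =>
    rw [← (Equiv.funUnique (Fin 1) α).symm.sum_comp]
    simp [Matrix.one_apply, ite_and]
  | succ n ih =>
    rw [List.ofFn_succ, List.prod_cons, Matrix.mul_apply]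
    rw [← (Fin.consEquiv (fun _ : Fin (n + 2) => α)).sum_comp, Fintype.sum_prod_type]
    simp only [ih, Fin.consEquiv_apply, Fin.cons_zero, ← Fin.succ_last, Fin.cons_succ,
      Fin.prod_univ_succ, Fin.castSucc_zero, ← Fin.succ_castSucc]
    simp only [ite_and, Finset.mul_sum]
    rw [Finset.sum_comm]
    simp only [mul_ite, mul_zero, Finset.sum_ite_eq, Finset.mem_univ, if_true]
    rw [Finset.sum_comm]
    refine Finset.sum_congr rfl fun f _ => ?_
    simp

open Classical in
theorem chainSum_eq {n : ℕ} (p : Fin n → ℕ) (hp : ∀ i, 0 < p i) (x y : α) :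
    (∑ f : Fin (n + 1) → α,
      if IsStrictChain (· < ·) f ∧ f 0 = x ∧ f (Fin.last n) = y then
        (∏ i : Fin n, G (PsiRel k (· < ·) rk (f i.castSucc) (f i.succ))) *
          (if List.ofFn p = List.ofFn (fun i : Fin n => rk (f i.succ) - rk (f i.castSucc))
            then 1 else 0) else 0) =
    (List.ofFn fun i => Emat k G rk (p i)).prod x y := by
  rw [ofFn_prod_apply]
  refine Finset.sum_congr rfl fun f _ => ?_
  by_cases h : f 0 = x ∧ f (Fin.last n) = y
  swap
  · rw [if_neg h, if_neg (fun h' => h h'.2)]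
  rw [if_pos h]
  simp only [Emat_pos k G rk (hp _), strictChain_iff, List.ofFn_inj]
  by_cases h2 : ∀ i : Fin n, f i.castSucc < f i.succ ∧ rk (f i.succ) - rk (f i.castSucc) = p i
  · rw [if_pos ⟨fun i => (h2 i).1, h⟩, if_pos (funext fun i => (h2 i).2.symm), mul_one]
    exact Finset.prod_congr rfl fun i _ => by rw [if_pos (h2 i)]
  · obtain ⟨i, hi⟩ := not_forall.1 h2
    have hz : (∏ i : Fin n, if f i.castSucc < f i.succ ∧ rk (f i.succ) - rk (f i.castSucc) = p i
        then G (PsiRel k (· < ·) rk (f i.castSucc) (f i.succ)) else 0) = 0 :=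
      Finset.prod_eq_zero (Finset.mem_univ i) (if_neg hi)
    rw [hz]
    split_ifs with h3 h4
    · exact absurd ⟨h3.1 i, (congrFun h4 i).symm⟩ hi
    · simp
    · rfl

theorem coeff_gtF (x y : α) (m : ℕ →₀ ℕ) :
    MvPowerSeries.coeff m (gtF k G (· < ·) rk x y) =
      ((m.support.sort (· ≤ ·)).map fun i => Emat k G rk (m i)).prod x y := by
  classical
  set ps := (m.support.sort (· ≤ ·)).map fun i => m i with hps
  have hpos : ∀ p ∈ ps, 0 < p := by
    intro p hp
    simp only [hps, List.mem_map, Finset.mem_sort, Finsupp.mem_support_iff] at hp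
    obtain ⟨i, hi, rfl⟩ := hp
    omega
  have hR : ((m.support.sort (· ≤ ·)).map fun i => Emat k G rk (m i)) =
      List.ofFn fun i : Fin ps.length => Emat k G rk (ps.get i) := by
    rw [show (fun i : Fin ps.length => Emat k G rk (ps.get i)) = (Emat k G rk) ∘ ps.get from rfl,
      ← List.map_ofFn, List.ofFn_get, hps, List.map_map]
    rfl
  rw [hR, ← chainSum_eq k G rk _ (fun i => hpos _ (List.get_mem _ _))]
  unfold gtF
  rw [finsum_eq_sum_of_support_subset
    (s := Finset.range (Fintype.card α + ps.length + 1))]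
  · rw [map_sum, Finset.sum_eq_single ps.length]
    · rw [finsum_eq_sum_of_fintype, map_sum]
      refine Finset.sum_congr rfl fun f _ => ?_
      rw [finsum_eq_if]
      rw [List.ofFn_get]
      by_cases h1 : IsStrictChain (· < ·) f ∧ f 0 = x ∧ f (Fin.last ps.length) = y
      · rw [if_pos h1, if_pos h1, map_smul, smul_eq_mul, coeff_MQ, ← hps]
      · rw [if_neg h1, if_neg h1, map_zero]
    · intro n _ hn
      rw [finsum_eq_sum_of_fintype, map_sum]
      refine Finset.sum_eq_zero fun f _ => ?_
      rw [finsum_eq_if]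
      split_ifs
      · rw [map_smul, smul_eq_mul, coeff_MQ, ← hps, if_neg, mul_zero]
        intro h
        apply hn
        rw [h]; simp
      · simp
    · intro h
      exact absurd (Finset.mem_range.2 (by omega)) h
  · intro n hn
    by_contra hcon
    apply hn
    simp only [Finset.coe_range, Set.mem_Iio, not_lt] at hcon
    beta_reduce
    rw [finsum_eq_sum_of_fintype]
    refine Finset.sum_eq_zero fun f _ => ?_
    rw [finsum_eq_if, if_neg]
    rintro ⟨h, -⟩
    have hm : StrictMono f := fun i j hij => h i j hij
    have := Fintype.card_le_of_injective f hm.injective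
    simp at this
    omega

open Classical in
theorem coeff_Xprod (l : List ℕ) (hl : l.Nodup) (x y : α) (m : ℕ →₀ ℕ) :
    MvPowerSeries.coeff m ((l.map (Xmat k G rk)).prod x y) =
      if ∀ i, i ∉ l → m i = 0 then (l.map fun i => Emat k G rk (m i)).prod x y else 0 := by
  classical
  induction l generalizing x m with
  | nil =>
    simp only [List.map_nil, List.prod_nil, Matrix.one_apply, List.not_mem_nil, not_false_eq_true,
      forall_const]
    have : (∀ i, m i = 0) ↔ m = 0 := by
      rw [Finsupp.ext_iff]; rfl
    rw [this]
    by_cases hxy : x = y <;> simp [hxy, MvPowerSeries.coeff_one]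
  | cons j l ih =>
    have hj : j ∉ l := (List.nodup_cons.1 hl).1
    have hl' := (List.nodup_cons.1 hl).2
    simp only [List.map_cons, List.prod_cons, Matrix.mul_apply, map_sum]
    have key : ∀ z, MvPowerSeries.coeff m (Xmat k G rk j x z * (l.map (Xmat k G rk)).prod z y) =
        if ∀ i, i ∉ j :: l → m i = 0 then
          Emat k G rk (m j) x z * (l.map fun i => Emat k G rk (m i)).prod z y else 0 := by
      intro z
      unfold Xmat Emat
      by_cases hxz : x ≤ z
      swap
      · simp [hxz]
      simp only [hxz, if_true, true_and]
      rw [MvPowerSeries.coeff_monomial_mul]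
      change (if _ then _ * MvPowerSeries.coeff _ ((l.map (Xmat k G rk)).prod z y) else 0) = 
        if _ then (if _ then _ else 0) * (l.map fun i => Emat k G rk (m i)).prod z y else 0
      rw [ih hl']
      set d := rk z - rk x with hd
      have hmap : (l.map fun i => Emat k G rk ((m - Finsupp.single j d) i)) =
          l.map fun i => Emat k G rk (m i) := by
        refine List.map_congr_left fun i hi => ?_
        have : j ≠ i := fun h => hj (h ▸ hi)
        simp [Finsupp.single_apply, this]
      rw [hmap]
      have hle : Finsupp.single j d ≤ m ↔ d ≤ m j := Finsupp.single_le_iff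
      by_cases hdm : d = m j
      · rw [if_pos (hle.2 hdm.le), if_pos hdm]
        have : (∀ i, i ∉ l → (m - Finsupp.single j d) i = 0) ↔ ∀ i, i ∉ j :: l → m i = 0 := by
          refine forall_congr' fun i => ?_
          by_cases hij : j = i
          · subst hij; simp [hdm]
          · simp [Finsupp.single_apply, hij, Ne.symm hij]
        rw [mul_ite, mul_zero]
        simp only [this]
      · rw [if_neg hdm, zero_mul, ite_self]
        split_ifs with h1 h2
        · have h1' := hle.1 h1
          have := h2 j hj
          simp at this
          omega
        · simp
        · rfl
    simp only [key]
    split_ifs <;> simp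

/-- Removing the indices with exponent zero does not change the product. -/
theorem prod_filter_eq (h : StrictMono rk) (m : ℕ →₀ ℕ) (l : List ℕ) :
    (l.map fun i => Emat k G rk (m i)).prod =
      ((l.filter (fun i => m i ≠ 0)).map fun i => Emat k G rk (m i)).prod := by
  induction l with
  | nil => rfl
  | cons j l ih =>
    by_cases hj : m j = 0
    · simp [hj, Emat_zero k G rk h, ih]
    · simp [hj, ih]

theorem coeff_gtF_eq (h : StrictMono rk) (x y : α) (m : ℕ →₀ ℕ) (N : ℕ)
    (hN : ∀ i, N ≤ i → m i = 0) :
    MvPowerSeries.coeff m (gtF k G (· < ·) rk x y) =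
      MvPowerSeries.coeff m (((List.range N).map (Xmat k G rk)).prod x y) := by
  rw [coeff_Xprod k G rk _ List.nodup_range, coeff_gtF, if_pos,
    prod_filter_eq k G rk h m (List.range N)]
  · refine congrArg (fun l : List ℕ => (l.map fun i => Emat k G rk (m i)).prod x y) ?_
    refine List.Perm.eq_of_pairwise' (r := fun a b : ℕ => a ≤ b) (Finset.pairwise_sort _ _) ?_ ?_
    · exact (List.pairwise_le_range).filter _
    · rw [List.perm_ext_iff_of_nodup (Finset.sort_nodup _ _) (List.nodup_range.filter _)]
      intro i
      simp only [Finset.mem_sort, Finsupp.mem_support_iff, List.mem_filter, List.mem_range,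
        decide_eq_true_eq]
      refine ⟨fun hi => ⟨?_, hi⟩, fun hi => hi.2⟩
      by_contra hc
      exact hi (hN i (by omega))
  · intro i hi
    exact hN i (by simpa using hi)

end Mat

open Kronecker in
theorem prod_kronecker {S : Type} [CommRing S] {α β : Type} [Fintype α] [Fintype β]
    [DecidableEq α] [DecidableEq β] (A : ℕ → Matrix α α S) (B : ℕ → Matrix β β S) (l : List ℕ) :
    (l.map fun i => A i ⊗ₖ B i).prod = (l.map A).prod ⊗ₖ (l.map B).prod := by
  induction l with
  | nil => simp
  | cons j l ih => simp [ih, Matrix.mul_kronecker_mul]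

theorem icc_rank {α : Type} [PartialOrder α] [BoundedOrder α] {rk : α → ℕ}
    (h : IsRankFun α rk) (hm : Monotone rk) {x y : α} [Fact (x ≤ y)] :
    IsRankFun (Set.Icc x y) (fun z => rk z.1 - rk x) := by
  refine ⟨Nat.sub_self _, fun u v huv => ?_⟩
  have hc : u.1 ⋖ v.1 := by
    refine ⟨huv.1, fun c h1 h2 => ?_⟩
    exact huv.2 (c := ⟨c, u.2.1.trans h1.le, h2.le.trans v.2.2⟩) h1 h2
  have h1 := h.2 _ _ hc
  have h2 := hm u.2.1
  change rk v.1 - rk x = rk u.1 - rk x + 1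
  omega

theorem PsiRel_icc (R : Type) [CommRing R] {α : Type} [PartialOrder α]
    (rk : α → ℕ) (hm : Monotone rk) (x y : α) [Fact (x ≤ y)] :
    PsiRel R (· < ·) rk x y =
      PsiRel R (· < ·) (fun z : Set.Icc x y => rk z.1 - rk x) ⊥ ⊤ := by
  refine PsiRel_transport R rk _ (OrderEmbedding.subtype (· ∈ Set.Icc x y))
    (⊥ : Set.Icc x y) (⊤ : Set.Icc x y) (fun z h1 h2 => ⟨⟨z, h1, h2⟩, rfl⟩) ?_
  intro u v _ _
  have h1 := hm u.2.1
  have h2 := hm v.2.1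
  change rk v.1 - rk u.1 = rk v.1 - rk x - (rk u.1 - rk x)
  omega

theorem gval_mul (k : Type) [Field k] (G : AB k →ₗ[k] k) (hG : IsCharacter k G)
    {α β : Type} [Fintype α] [Fintype β] [PartialOrder α] [PartialOrder β]
    [BoundedOrder α] [BoundedOrder β] (rkα : α → ℕ) (rkβ : β → ℕ)
    (hα : IsRankFun α rkα) (hβ : IsRankFun β rkβ) (a a' : α) (b b' : β)
    (ha : a ≤ a') (hb : b ≤ b') :
    gval k G (fun p : α × β => rkα p.1 + rkβ p.2) (a, b) (a', b') =
      gval k G rkα a a' * gval k G rkβ b b' := by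
  classical
  have hmα := rank_strictMono hα
  have hmβ := rank_strictMono hβ
  unfold gval
  by_cases h1 : a = a'
  · subst h1
    by_cases h2 : b = b'
    · subst h2; simp
    · rw [if_neg (fun h => h2 (Prod.ext_iff.1 h).2), if_pos rfl, if_neg h2, one_mul]
      congr 1
      let e : β ↪o α × β := ⟨⟨fun z => (a, z), fun u v h => (Prod.ext_iff.1 h).2⟩,
        fun {u v} => ⟨fun h => h.2, fun h => ⟨le_rfl, h⟩⟩⟩
      refine PsiRel_transport k _ rkβ e b b' ?_ ?_
      · rintro ⟨z1, z2⟩ hz1 hz2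
        exact ⟨z2, Prod.ext (le_antisymm hz1.1 hz2.1) rfl⟩
      · intro u v _ _
        change rkα a + rkβ v - (rkα a + rkβ u) = _
        omega
  · by_cases h2 : b = b'
    · subst h2
      rw [if_neg (fun h => h1 (Prod.ext_iff.1 h).1), if_pos rfl, if_neg h1, mul_one]
      congr 1
      let e : α ↪o α × β := ⟨⟨fun z => (z, b), fun u v h => (Prod.ext_iff.1 h).1⟩,
        fun {u v} => ⟨fun h => h.1, fun h => ⟨h, le_rfl⟩⟩⟩
      refine PsiRel_transport k _ rkα e a a' ?_ ?_
      · rintro ⟨z1, z2⟩ hz1 hz2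
        exact ⟨z1, Prod.ext rfl (le_antisymm hz1.2 hz2.2)⟩
      · intro u v _ _
        change rkα v + rkβ b - (rkα u + rkβ b) = _
        omega
    · rw [if_neg (fun h => h1 (Prod.ext_iff.1 h).1), if_neg h1, if_neg h2]
      have : Fact (a ≤ a') := ⟨ha⟩
      have : Fact (b ≤ b') := ⟨hb⟩
      rw [PsiRel_icc k rkα hmα.monotone a a', PsiRel_icc k rkβ hmβ.monotone b b']
      have hA := hmα (lt_of_le_of_ne ha h1)
      have hB := hmβ (lt_of_le_of_ne hb h2)
      rw [← hG (Set.Icc a a') (Set.Icc b b') _ _ (icc_rank hα hmα.monotone)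
        (icc_rank hβ hmβ.monotone)
        (by change 1 ≤ rkα a' - rkα a; omega) (by change 1 ≤ rkβ b' - rkβ b; omega)]
      congr 1
      let e : Set.Icc a a' × Set.Icc b b' ↪o α × β :=
        ⟨⟨fun z => (z.1.1, z.2.1), fun u v h =>
          Prod.ext (Subtype.ext (Prod.ext_iff.1 h).1) (Subtype.ext (Prod.ext_iff.1 h).2)⟩,
          by intro u v; exact Iff.rfl⟩
      refine PsiRel_transport k _ _ e (⊥, ⊥) (⊤, ⊤) ?_ ?_
      · rintro ⟨z1, z2⟩ hz1 hz2
        exact ⟨(⟨z1, hz1.1, hz2.1⟩, ⟨z2, hz1.2, hz2.2⟩), rfl⟩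
      · intro u v _ huv
        have e1 := hmα.monotone u.1.2.1
        have e2 := hmβ.monotone u.2.2.1
        have e3 : rkα u.1.1 ≤ rkα v.1.1 := hmα.monotone huv.le.1
        have e4 : rkβ u.2.1 ≤ rkβ v.2.1 := hmβ.monotone huv.le.2
        change rkα v.1.1 + rkβ v.2.1 - (rkα u.1.1 + rkβ u.2.1) =
          rkα v.1.1 - rkα a + (rkβ v.2.1 - rkβ b) - (rkα u.1.1 - rkα a + (rkβ u.2.1 - rkβ b))
        omega

open Kronecker in
theorem Xmat_kronecker (k : Type) [Field k] (G : AB k →ₗ[k] k) (hG : IsCharacter k G)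
    {α β : Type} [Fintype α] [Fintype β] [PartialOrder α] [PartialOrder β]
    [BoundedOrder α] [BoundedOrder β] (rkα : α → ℕ) (rkβ : β → ℕ)
    (hα : IsRankFun α rkα) (hβ : IsRankFun β rkβ) (i : ℕ) :
    Xmat k G (fun p : α × β => rkα p.1 + rkβ p.2) i = Xmat k G rkα i ⊗ₖ Xmat k G rkβ i := by
  ext1 ⟨a, b⟩ ⟨a', b'⟩
  rw [Matrix.kroneckerMap_apply]
  unfold Xmat
  by_cases ha : a ≤ a'
  swap
  · rw [if_neg (fun h => ha h.1)]; simp [ha]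
  by_cases hb : b ≤ b'
  swap
  · rw [if_neg (fun h => hb h.2)]; simp [hb]
  rw [if_pos (show (a, b) ≤ (a', b') from ⟨ha, hb⟩)]
  simp only [ha, hb, if_true]
  rw [MvPowerSeries.monomial_mul_monomial, gval_mul k G hG rkα rkβ hα hβ a a' b b' ha hb,
    ← Finsupp.single_add]
  have e1 := (rank_strictMono hα).monotone ha
  have e2 := (rank_strictMono hβ).monotone hb
  congr 3
  omega

theorem chain_map_second_kind_multiplicative
    (k : Type) [Field k] (G : AB k →ₗ[k] k) (hG : IsCharacter k G)
    (α β : Type) [Fintype α] [Fintype β] [PartialOrder α] [PartialOrder β]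
    [BoundedOrder α] [BoundedOrder β] (rkα : α → ℕ) (rkβ : β → ℕ)
    (hα : IsRankFun α rkα) (hβ : IsRankFun β rkβ) :
    gtF k G (· < ·) (fun p : α × β => rkα p.1 + rkβ p.2)
        ((⊥ : α), (⊥ : β)) ((⊤ : α), (⊤ : β)) =
      gtF k G (· < ·) rkα (⊥ : α) (⊤ : α) * gtF k G (· < ·) rkβ (⊥ : β) (⊤ : β) := by
  classical
  have hmα := rank_strictMono hα
  have hmβ := rank_strictMono hβ
  have hm : StrictMono (fun p : α × β => rkα p.1 + rkβ p.2) := by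
    rintro ⟨a, b⟩ ⟨a', b'⟩ h
    rcases Prod.mk_lt_mk.1 h with ⟨h1, h2⟩ | ⟨h1, h2⟩
    · exact add_lt_add_of_lt_of_le (hmα h1) (hmβ.monotone h2)
    · exact add_lt_add_of_le_of_lt (hmα.monotone h1) (hmβ h2)
  ext m
  obtain ⟨N, hN⟩ : ∃ N, ∀ i, N ≤ i → m i = 0 := by
    refine ⟨m.support.sup id + 1, fun i hi => ?_⟩
    by_contra hc
    have := Finset.le_sup (f := id) (Finsupp.mem_support_iff.2 hc)
    simp only [id] at this
    omega
  rw [coeff_gtF_eq k G _ hm _ _ m N hN,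
    funext (Xmat_kronecker k G hG rkα rkβ hα hβ), prod_kronecker, Matrix.kroneckerMap_apply,
    MvPowerSeries.coeff_mul, MvPowerSeries.coeff_mul]
  refine Finset.sum_congr rfl fun p hp => ?_
  have hp' := Finset.HasAntidiagonal.mem_antidiagonal.1 hp
  have hz : ∀ i, N ≤ i → p.1 i = 0 ∧ p.2 i = 0 := by
    intro i hi
    have h1 := hN i hi
    rw [← hp', Finsupp.add_apply] at h1
    omega
  rw [coeff_gtF_eq k G rkα hmα _ _ p.1 N fun i hi => (hz i hi).1,
    coeff_gtF_eq k G rkβ hmβ _ _ p.2 N fun i hi => (hz i hi).2]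

end Tcheb
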